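/- Suppose X'X/n → Q with Q symmetric positive definite. Let M̂ be a sequence of measurable model selectors taking values in {M_R, M_U} such that P_{n,β,σ}(M̂ = M_R) → 1 whenever β₂ = 0 and P_{n,β,σ}(M̂ = M_U) → 1 whenever β₂ ≠ 0. Define the random density f̌_n to equal the N(0, σ²(X'X/n)⁻¹) density on the event {M̂ = M_U}, and to equal f†_{∞,0} (the formula for f_{∞,0} with Q replaced by X'X/n) otherwise. Then for every β ∈ ℝ^k, ∫_{ℝ^k} |f̌_n(z) − f_{n,β,σ}(z)| dz → 0 in P_{n,β,σ}-probability as n → ∞; consequently, for every δ > 0, P_{n,β,σ}(‖F̌_n − F_{n,β,σ}‖_{TV} > δ) → 0, where F̌_n is the cdf corresponding to f̌_n and F_{n,β,σ} is the cdf of √n(β̃ − β). -/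

import Mathlib

open MeasureTheory Matrix Real Filter Topology ENNReal NNReal

noncomputable section

/-- Euclidean norm of a finite tuple. -/
def enorm2 {ι : Type*} [Fintype ι] (v : ι → ℝ) : ℝ := Real.sqrt (∑ i, v i ^ 2)

/-- The `N(0, σ² I)` distribution on `ι → ℝ`, given by its Lebesgue density. -/
def gaussPi (ι : Type*) [Fintype ι] (σ2 : ℝ) : Measure (ι → ℝ) :=
  volume.withDensity fun x => ENNReal.ofReal
    ((2 * π * σ2) ^ (-(Fintype.card ι : ℝ) / 2) * Real.exp (-(enorm2 x) ^ 2 / (2 * σ2)))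

/-- The Lebesgue density of the `N(0, σ² Q⁻¹)` distribution on `ι → ℝ`
(for `Q` symmetric positive definite). -/
def gaussCovDens {ι : Type*} [Fintype ι] [DecidableEq ι] (σ2 : ℝ) (Q : Matrix ι ι ℝ)
    (x : ι → ℝ) : ℝ :=
  (2 * π * σ2) ^ (-(Fintype.card ι : ℝ) / 2) * Real.sqrt Q.det *
    Real.exp (-(x ⬝ᵥ Q.mulVec x) / (2 * σ2))

/-- The `N(0, σ² Q⁻¹)` distribution on `ι → ℝ` (for `Q` symmetric positive definite),
given by its Lebesgue density. -/
def gaussCov {ι : Type*} [Fintype ι] [DecidableEq ι] (σ2 : ℝ) (Q : Matrix ι ι ℝ) :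
    Measure (ι → ℝ) :=
  volume.withDensity fun x => ENNReal.ofReal (gaussCovDens σ2 Q x)

/-- The positive semidefinite square root of a positive semidefinite matrix
(Mathlib's former `Matrix.PosSemidef.sqrt`, since removed, over `ℝ`). -/
def Matrix.PosSemidef.sqrt {n : Type*} [Fintype n] [DecidableEq n]
    {A : Matrix n n ℝ} (hA : A.PosSemidef) : Matrix n n ℝ :=
  hA.1.eigenvectorUnitary.1 * diagonal (Real.sqrt ∘ hA.1.eigenvalues) *
    (star hA.1.eigenvectorUnitary : Matrix n n ℝ)

open Classical in
/-- Symmetric positive semidefinite square root (junk value `0` off the psd cone). -/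
def msqrt {ι : Type*} [Fintype ι] [DecidableEq ι] (A : Matrix ι ι ℝ) : Matrix ι ι ℝ :=
  if h : A.PosSemidef then h.sqrt else 0

open Classical in
/-- Smallest eigenvalue of a symmetric matrix (junk value `0` otherwise). -/
def lamMin {ι : Type*} [Fintype ι] [DecidableEq ι] (A : Matrix ι ι ℝ) : ℝ :=
  if h : A.IsHermitian then ⨅ i, h.eigenvalues i else 0

open Classical in
/-- Largest eigenvalue of a symmetric matrix (junk value `0` otherwise). -/
def lamMax {ι : Type*} [Fintype ι] [DecidableEq ι] (A : Matrix ι ι ℝ) : ℝ :=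
  if h : A.IsHermitian then ⨆ i, h.eigenvalues i else 0

variable {n k₁ k₂ : ℕ}

/-- First block of columns of the design matrix. -/
def X1 (X : Matrix (Fin n) (Fin k₁ ⊕ Fin k₂) ℝ) : Matrix (Fin n) (Fin k₁) ℝ :=
  X.submatrix id Sum.inl

/-- Second block of columns of the design matrix. -/
def X2 (X : Matrix (Fin n) (Fin k₁ ⊕ Fin k₂) ℝ) : Matrix (Fin n) (Fin k₂) ℝ :=
  X.submatrix id Sum.inr

/-- Unrestricted least squares estimator. -/
def betaU (X : Matrix (Fin n) (Fin k₁ ⊕ Fin k₂) ℝ) (Y : Fin n → ℝ) : (Fin k₁ ⊕ Fin k₂) → ℝ :=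
  (Xᵀ * X)⁻¹.mulVec (Xᵀ.mulVec Y)

/-- Restricted least squares estimator. -/
def betaR (X : Matrix (Fin n) (Fin k₁ ⊕ Fin k₂) ℝ) (Y : Fin n → ℝ) : (Fin k₁ ⊕ Fin k₂) → ℝ :=
  Sum.elim (((X1 X)ᵀ * X1 X)⁻¹.mulVec ((X1 X)ᵀ.mulVec Y)) (fun _ => 0)

/-- Risk estimate of the restricted model. -/
def rR (X : Matrix (Fin n) (Fin k₁ ⊕ Fin k₂) ℝ) (σ2 : ℝ) (Y : Fin n → ℝ) : ℝ :=
  Y ⬝ᵥ Y - betaR X Y ⬝ᵥ (Xᵀ * X).mulVec (betaR X Y) + σ2 * (2 * k₁ - n)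

/-- Risk estimate of the unrestricted model. -/
def rU (X : Matrix (Fin n) (Fin k₁ ⊕ Fin k₂) ℝ) (σ2 : ℝ) (Y : Fin n → ℝ) : ℝ :=
  Y ⬝ᵥ Y - betaU X Y ⬝ᵥ (Xᵀ * X).mulVec (betaU X Y) + σ2 * (2 * (k₁ + k₂) - n)

/-- The model averaging weight `λ̂`. -/
def lamHat (α σ2 : ℝ) (X : Matrix (Fin n) (Fin k₁ ⊕ Fin k₂) ℝ) (Y : Fin n → ℝ) : ℝ :=
  Real.exp (-(α * rR X σ2 Y) / σ2) /
    (Real.exp (-(α * rR X σ2 Y) / σ2) + Real.exp (-(α * rU X σ2 Y) / σ2))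

/-- Leung and Barron's model averaging estimator `β̃`. -/
def mavg (α σ2 : ℝ) (X : Matrix (Fin n) (Fin k₁ ⊕ Fin k₂) ℝ) (Y : Fin n → ℝ) :
    (Fin k₁ ⊕ Fin k₂) → ℝ :=
  lamHat α σ2 X Y • betaR X Y + (1 - lamHat α σ2 X Y) • betaU X Y

/-- Projection on the column space of `X₁`. -/
def projR (X : Matrix (Fin n) (Fin k₁ ⊕ Fin k₂) ℝ) : Matrix (Fin n) (Fin n) ℝ :=
  X1 X * ((X1 X)ᵀ * X1 X)⁻¹ * (X1 X)ᵀ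

/-- Projection on the column space of `X`. -/
def projU (X : Matrix (Fin n) (Fin k₁ ⊕ Fin k₂) ℝ) : Matrix (Fin n) (Fin n) ℝ :=
  X * (Xᵀ * X)⁻¹ * Xᵀ

/-- The distribution `P_{n,β,σ}` of `Y = Xβ + u`, `u ~ N(0, σ² Iₙ)`. -/
def Pmeas (X : Matrix (Fin n) (Fin k₁ ⊕ Fin k₂) ℝ) (β : (Fin k₁ ⊕ Fin k₂) → ℝ) (σ2 : ℝ) :
    Measure (Fin n → ℝ) :=
  (gaussPi (Fin n) σ2).map (fun u => X.mulVec β + u)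

/-- The function `h_{a,b}(ξ) = ξ / (1 + a exp(−ξ²/b))`. -/
def hfun (a b ξ : ℝ) : ℝ := ξ / (1 + a * Real.exp (-ξ ^ 2 / b))

/-- The inverse `g_{a,b}` of `h_{a,b}`. -/
def gfun (a b : ℝ) : ℝ → ℝ := Function.invFun (hfun a b)

open Classical in
/-- `g(‖w‖) w / ‖w‖`, with the convention that this is `0` for `w = 0`. -/
def gdir (a b : ℝ) {ι : Type*} [Fintype ι] (w : ι → ℝ) : ι → ℝ :=
  if w = 0 then 0 else (gfun a b (enorm2 w) / enorm2 w) • w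


/-- The finite-sample density `f_{n,β,σ}` of `√n(β̃ − β)` (Theorem 3 of the paper). -/
def fdens {n k₁ k₂ : ℕ} (X : Matrix (Fin n) (Fin k₁ ⊕ Fin k₂) ℝ)
    (β : (Fin k₁ ⊕ Fin k₂) → ℝ) (σ2 α : ℝ) (t : (Fin k₁ ⊕ Fin k₂) → ℝ) : ℝ :=
  let a := Real.exp (2 * α * k₂)
  let b := σ2 / α
  let S := (X2 X)ᵀ * (1 - projR X) * X2 X
  let w := (Real.sqrt n)⁻¹ • (msqrt S).mulVec ((t ∘ Sum.inr) + Real.sqrt n • (β ∘ Sum.inr))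
  (2 * π * σ2) ^ (-((k₁ : ℝ) + k₂) / 2) * Real.sqrt (((n : ℝ)⁻¹ • (Xᵀ * X)).det) *
    Real.exp (-(enorm2 ((Real.sqrt n)⁻¹ •
        ((msqrt ((X1 X)ᵀ * X1 X)).mulVec (t ∘ Sum.inl) +
          ((msqrt ((X1 X)ᵀ * X1 X))⁻¹ * (X1 X)ᵀ * X2 X).mulVec (t ∘ Sum.inr)))) ^ 2 /
      (2 * σ2)) *
    (1 + Real.exp (-(α / σ2) * gfun a b (enorm2 w) ^ 2 + 2 * α * k₂)) ^ (k₂ : ℕ) *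
    (1 + (2 * α / σ2) * gfun a b (enorm2 w) ^ 2 *
        (1 + Real.exp ((α / σ2) * gfun a b (enorm2 w) ^ 2 - 2 * α * k₂))⁻¹)⁻¹ *
    Real.exp (-(enorm2 (gdir a b w - (msqrt S).mulVec (β ∘ Sum.inr))) ^ 2 / (2 * σ2))

/-- The density `f_{∞,γ}` of the limiting distribution (formula (13) of the paper),
stated for a general symmetric positive definite matrix in place of `Q`. -/
def fInfty {k₁ k₂ : ℕ} (Q : Matrix (Fin k₁ ⊕ Fin k₂) (Fin k₁ ⊕ Fin k₂) ℝ) (σ2 α : ℝ)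
    (γ : Fin k₂ → ℝ) (t : (Fin k₁ ⊕ Fin k₂) → ℝ) : ℝ :=
  let a := Real.exp (2 * α * k₂)
  let b := σ2 / α
  let S := Q.toBlocks₂₂ - Q.toBlocks₂₁ * Q.toBlocks₁₁⁻¹ * Q.toBlocks₁₂
  let w := (msqrt S).mulVec ((t ∘ Sum.inr) + γ)
  (2 * π * σ2) ^ (-((k₁ : ℝ) + k₂) / 2) * Real.sqrt Q.det *
    Real.exp (-(enorm2 ((msqrt Q.toBlocks₁₁).mulVec (t ∘ Sum.inl) +
        ((msqrt Q.toBlocks₁₁)⁻¹ * Q.toBlocks₁₂).mulVec (t ∘ Sum.inr))) ^ 2 / (2 * σ2)) *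
    (1 + Real.exp (-(α / σ2) * gfun a b (enorm2 w) ^ 2 + 2 * α * k₂)) ^ (k₂ : ℕ) *
    (1 + (2 * α / σ2) * gfun a b (enorm2 w) ^ 2 *
        (1 + Real.exp ((α / σ2) * gfun a b (enorm2 w) ^ 2 - 2 * α * k₂))⁻¹)⁻¹ *
    Real.exp (-(enorm2 (gdir a b w - (msqrt S).mulVec γ)) ^ 2 / (2 * σ2))


/-- The limiting law (12): the distribution of
`B_∞γ + C_∞Z₁ + [1 + exp(2αk₂) exp(−α‖Z₂ + (Q₂₂ − Q₂₁Q₁₁⁻¹Q₁₂)^{1/2}γ‖²/σ²)]⁻¹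
  · (D_∞Z₂ − B_∞γ)` with `Z₁ ~ N(0, σ²I_{k₁})`, `Z₂ ~ N(0, σ²I_{k₂})` independent. -/
def limitLaw {k₁ k₂ : ℕ} (Q : Matrix (Fin k₁ ⊕ Fin k₂) (Fin k₁ ⊕ Fin k₂) ℝ) (σ2 α : ℝ)
    (γ : Fin k₂ → ℝ) : Measure ((Fin k₁ ⊕ Fin k₂) → ℝ) :=
  ((gaussPi (Fin k₁) σ2).prod (gaussPi (Fin k₂) σ2)).map
    (fun Z : (Fin k₁ → ℝ) × (Fin k₂ → ℝ) =>
      (fromRows (Q.toBlocks₁₁⁻¹ * Q.toBlocks₁₂) (-1)).mulVec γ +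
      (fromRows (msqrt Q.toBlocks₁₁)⁻¹ 0).mulVec Z.1 +
      (1 + Real.exp (2 * α * k₂) *
          Real.exp (-α * (enorm2 (Z.2 +
            (msqrt (Q.toBlocks₂₂ - Q.toBlocks₂₁ * Q.toBlocks₁₁⁻¹ * Q.toBlocks₁₂)).mulVec
              γ)) ^ 2 / σ2))⁻¹ •
        ((fromRows
            (-(Q.toBlocks₁₁⁻¹ * Q.toBlocks₁₂ *
              (msqrt (Q.toBlocks₂₂ - Q.toBlocks₂₁ * Q.toBlocks₁₁⁻¹ * Q.toBlocks₁₂))⁻¹))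
            ((msqrt (Q.toBlocks₂₂ - Q.toBlocks₂₁ * Q.toBlocks₁₁⁻¹ * Q.toBlocks₁₂))⁻¹)).mulVec
            Z.2 -
          (fromRows (Q.toBlocks₁₁⁻¹ * Q.toBlocks₁₂) (-1)).mulVec γ))

/-!
Let `M = X'X/n` and let `S` be the Schur complement of its upper left block. Completing the square
in `t'Mt` exhibits `f_{n,β,σ}` as `f^M_{∞,γ}` with `γ = √n β₂`, and `f^M_{∞,γ}` as the
`N(0, σ²M⁻¹)` density times a ratio depending only on `S^{1/2}t₂` and `S^{1/2}(t₂ + γ)`.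

If `β₂ = 0`, then `f_{n,β,σ}` is exactly the density used when `M_R` is selected. If `β₂ ≠ 0`, the
vector `S^{1/2}(t₂ + γ)` escapes to infinity, and the ratio tends to `1` because
`g(ξ) - ξ → 0` as `ξ → ∞`. As `g(ξ) - ξ` is also bounded on `[0, ∞)`, the ratio is at most a
constant times `exp(‖S^{1/2}t₂‖²/(4σ²))`, that is, it uses up at most half of the Gaussian
exponent; hence dominated convergence yields convergence in `L¹`, and `L¹` distance dominates
total variation. Finally, with probability tending to one the selector picks the right one of the
two densities.
-/

section EuclideanNorm

variable {ι : Type*} [Fintype ι]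

lemma enorm2_eq_norm_toLp (v : ι → ℝ) : enorm2 v = ‖WithLp.toLp 2 v‖ := by
  simp only [enorm2, EuclideanSpace.norm_eq, Real.norm_eq_abs, sq_abs]

lemma enorm2_nonneg (v : ι → ℝ) : 0 ≤ enorm2 v := Real.sqrt_nonneg _

lemma enorm2_sq (v : ι → ℝ) : enorm2 v ^ 2 = v ⬝ᵥ v := by
  rw [enorm2, Real.sq_sqrt (by positivity)]
  simp only [dotProduct, sq]

lemma enorm2_eq_zero {v : ι → ℝ} : enorm2 v = 0 ↔ v = 0 := by
  rw [enorm2_eq_norm_toLp, norm_eq_zero, WithLp.toLp_eq_zero]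

lemma enorm2_smul (c : ℝ) (v : ι → ℝ) : enorm2 (c • v) = |c| * enorm2 v := by
  simp only [enorm2_eq_norm_toLp, WithLp.toLp_smul, norm_smul, Real.norm_eq_abs]

lemma enorm2_add_le (v w : ι → ℝ) : enorm2 (v + w) ≤ enorm2 v + enorm2 w := by
  simpa only [enorm2_eq_norm_toLp, WithLp.toLp_add] using
    norm_add_le (WithLp.toLp 2 v) (WithLp.toLp 2 w)

lemma enorm2_le_enorm2_add (v w : ι → ℝ) : enorm2 v ≤ enorm2 (v + w) + enorm2 w := by
  simpa only [enorm2_eq_norm_toLp, WithLp.toLp_add] using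
    norm_le_add_norm_add (WithLp.toLp 2 v) (WithLp.toLp 2 w)

lemma continuous_enorm2 : Continuous (enorm2 : (ι → ℝ) → ℝ) := by
  unfold enorm2
  fun_prop

end EuclideanNorm

section RadialInverse

variable {a b : ℝ}

lemma hfun_neg (x : ℝ) : hfun a b (-x) = -hfun a b x := by
  simp only [hfun, neg_sq, neg_div]

lemma hfun_strictMono (ha : 0 ≤ a) (hb : 0 < b) : StrictMono (hfun a b) := by
  refine strictMono_of_odd_strictMonoOn_nonneg hfun_neg fun x (hx : 0 ≤ x) y _ hxy => ?_
  have hden : 1 + a * Real.exp (-y ^ 2 / b) ≤ 1 + a * Real.exp (-x ^ 2 / b) := by gcongr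
  calc hfun a b x ≤ x / (1 + a * Real.exp (-y ^ 2 / b)) := by
        unfold hfun; gcongr
    _ < hfun a b y := by unfold hfun; gcongr

lemma tendsto_hfun_atTop (ha : 0 ≤ a) (hb : 0 < b) : Tendsto (hfun a b) atTop atTop := by
  refine tendsto_atTop_mono' _ ?_ (tendsto_id.atTop_div_const (r := 1 + a) (by positivity))
  filter_upwards [eventually_ge_atTop 0] with x hx
  have hexp : Real.exp (-x ^ 2 / b) ≤ 1 :=
    Real.exp_le_one_iff.2 (div_nonpos_of_nonpos_of_nonneg (by nlinarith) hb.le)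
  calc x / (1 + a) ≤ x / (1 + a * Real.exp (-x ^ 2 / b)) := by
        gcongr
        exact mul_le_of_le_one_right ha hexp

lemma hfun_surjective (ha : 0 ≤ a) (hb : 0 < b) : Function.Surjective (hfun a b) := by
  have hcont : Continuous (hfun a b) :=
    continuous_id.div (by fun_prop) fun x => by positivity
  have hbot : Tendsto (hfun a b) atBot atBot := by
    refine (tendsto_neg_atTop_atBot.comp
      ((tendsto_hfun_atTop ha hb).comp tendsto_neg_atBot_atTop)).congr fun x => ?_
    simp only [Function.comp_apply, hfun_neg, neg_neg]
  exact hcont.surjective (tendsto_hfun_atTop ha hb) hbot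

lemma hfun_gfun (ha : 0 ≤ a) (hb : 0 < b) (x : ℝ) : hfun a b (gfun a b x) = x :=
  Function.invFun_eq (hfun_surjective ha hb x)

lemma gfun_monotone (ha : 0 ≤ a) (hb : 0 < b) : Monotone (gfun a b) := fun x y hxy => by
  rw [← (hfun_strictMono ha hb).le_iff_le, hfun_gfun ha hb, hfun_gfun ha hb]
  exact hxy

lemma gfun_sub_self (ha : 0 ≤ a) (hb : 0 < b) (x : ℝ) :
    gfun a b x - x = x * (a * Real.exp (-gfun a b x ^ 2 / b)) := by
  have hden : 0 < 1 + a * Real.exp (-gfun a b x ^ 2 / b) := by positivity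
  have hx : gfun a b x / (1 + a * Real.exp (-gfun a b x ^ 2 / b)) = x := hfun_gfun ha hb x
  rw [div_eq_iff hden.ne'] at hx
  linear_combination hx

lemma self_le_gfun (ha : 0 ≤ a) (hb : 0 < b) {x : ℝ} (hx : 0 ≤ x) : x ≤ gfun a b x := by
  rw [← sub_nonneg, gfun_sub_self ha hb]
  positivity

lemma gfun_sub_self_le (ha : 0 ≤ a) (hb : 0 < b) {x : ℝ} (hx : 0 ≤ x) :
    gfun a b x - x ≤ x * (a * Real.exp (-x ^ 2 / b)) := by
  have := self_le_gfun ha hb hx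
  rw [gfun_sub_self ha hb]
  gcongr

lemma gfun_sub_self_le_const (ha : 0 ≤ a) (hb : 0 < b) {x : ℝ} (hx : 0 ≤ x) :
    gfun a b x - x ≤ a * (1 + b) := by
  have hexp : Real.exp (-x ^ 2 / b) ≤ (1 + x ^ 2 / b)⁻¹ := by
    rw [neg_div, Real.exp_neg]
    gcongr
    linarith [Real.add_one_le_exp (x ^ 2 / b)]
  have hfrac : x * (1 + x ^ 2 / b)⁻¹ ≤ 1 + b := by
    rw [← div_eq_mul_inv, div_le_iff₀ (by positivity)]
    have : (1 + b) * (1 + x ^ 2 / b) = 1 + x ^ 2 + b + x ^ 2 / b := by field_simp; ring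
    have : 0 ≤ x ^ 2 / b := by positivity
    nlinarith [sq_nonneg (x - 1)]
  calc gfun a b x - x ≤ x * (a * Real.exp (-x ^ 2 / b)) := gfun_sub_self_le ha hb hx
    _ ≤ x * (a * (1 + x ^ 2 / b)⁻¹) := by gcongr
    _ = a * (x * (1 + x ^ 2 / b)⁻¹) := by ring
    _ ≤ a * (1 + b) := by gcongr

lemma tendsto_gfun_sub_self (ha : 0 ≤ a) (hb : 0 < b) :
    Tendsto (fun x => gfun a b x - x) atTop (𝓝 0) := by
  have hgauss : Tendsto (fun x : ℝ => x * (a * Real.exp (-x ^ 2 / b))) atTop (𝓝 0) := by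
    have := ((tendsto_rpow_abs_mul_exp_neg_mul_sq_cocompact (inv_pos.2 hb) 1).mono_left
      atTop_le_cocompact).const_mul a
    rw [mul_zero] at this
    refine this.congr' ?_
    filter_upwards [eventually_ge_atTop 0] with x hx
    rw [Real.rpow_one, abs_of_nonneg hx, show -b⁻¹ * x ^ 2 = -x ^ 2 / b by ring]
    ring
  refine tendsto_of_tendsto_of_tendsto_of_le_of_le' tendsto_const_nhds hgauss ?_ ?_ <;>
    filter_upwards [eventually_ge_atTop 0] with x hx
  · exact sub_nonneg.2 (self_le_gfun ha hb hx)
  · exact gfun_sub_self_le ha hb hx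

lemma tendsto_gfun_atTop (ha : 0 ≤ a) (hb : 0 < b) : Tendsto (gfun a b) atTop atTop :=
  tendsto_atTop_mono' _ ((eventually_ge_atTop 0).mono fun _ => self_le_gfun ha hb) tendsto_id

variable {ι : Type*} [Fintype ι]

lemma gdir_eq (w : ι → ℝ) : gdir a b w = (gfun a b (enorm2 w) / enorm2 w) • w := by
  unfold gdir
  split_ifs with hw
  · rw [hw, smul_zero]
  · rfl

lemma enorm2_gdir_sub_self (ha : 0 ≤ a) (hb : 0 < b) (w : ι → ℝ) :
    enorm2 (gdir a b w - w) = gfun a b (enorm2 w) - enorm2 w := by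
  have hg := self_le_gfun ha hb (enorm2_nonneg w)
  rcases (enorm2_nonneg w).eq_or_lt with hw | hw
  · have : gfun a b 0 - 0 = 0 := by rw [gfun_sub_self ha hb, zero_mul]
    rw [← hw, this, enorm2_eq_zero, gdir_eq, enorm2_eq_zero.1 hw.symm, smul_zero, sub_zero]
  · calc enorm2 (gdir a b w - w)
        = enorm2 ((gfun a b (enorm2 w) / enorm2 w - 1) • w) := by
          rw [gdir_eq, sub_smul, one_smul]
      _ = gfun a b (enorm2 w) - enorm2 w := by
          rw [enorm2_smul, div_sub_one hw.ne', abs_of_nonneg (by bound), div_mul_cancel₀ _ hw.ne']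

lemma measurable_gdir (ha : 0 ≤ a) (hb : 0 < b) :
    Measurable (gdir a b : (ι → ℝ) → ι → ℝ) := by
  have hg := (gfun_monotone ha hb).measurable
  have hnorm := (continuous_enorm2 (ι := ι)).measurable
  rw [show (gdir a b : (ι → ℝ) → ι → ℝ) = _ from funext gdir_eq]
  fun_prop

end RadialInverse

section DensityRatio

/-- The Jacobian determinant of `w ↦ gdir a b w` in dimension `d`, as a function of
`G = gfun a b ‖w‖`. -/
def radialJacobian (a b : ℝ) (d : ℕ) (G : ℝ) : ℝ :=
  (1 + a * Real.exp (-G ^ 2 / b)) ^ d * (1 + 2 * (G ^ 2 / b) * (1 + Real.exp (G ^ 2 / b) / a)⁻¹)⁻¹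

variable {a b : ℝ}

lemma radialJacobian_nonneg (ha : 0 ≤ a) (hb : 0 ≤ b) (d : ℕ) (G : ℝ) :
    0 ≤ radialJacobian a b d G := by
  unfold radialJacobian
  positivity

lemma radialJacobian_le (ha : 0 ≤ a) (hb : 0 ≤ b) (d : ℕ) (G : ℝ) :
    radialJacobian a b d G ≤ (1 + a) ^ d := by
  have hexp : Real.exp (-G ^ 2 / b) ≤ 1 :=
    Real.exp_le_one_iff.2 (div_nonpos_of_nonpos_of_nonneg (by nlinarith) hb)
  have hinv : (1 + 2 * (G ^ 2 / b) * (1 + Real.exp (G ^ 2 / b) / a)⁻¹)⁻¹ ≤ 1 :=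
    inv_le_one_of_one_le₀ (le_add_of_nonneg_right (by positivity))
  calc radialJacobian a b d G ≤ (1 + a * Real.exp (-G ^ 2 / b)) ^ d :=
        mul_le_of_le_one_right (by positivity) hinv
    _ ≤ (1 + a) ^ d := by
        gcongr
        exact mul_le_of_le_one_right ha hexp

lemma continuous_radialJacobian (ha : 0 ≤ a) (hb : 0 ≤ b) (d : ℕ) :
    Continuous (radialJacobian a b d) := by
  unfold radialJacobian
  refine .mul (by fun_prop) (.inv₀ (continuous_const.add (.mul (by fun_prop) ?_)) fun G => ?_)
  · exact .inv₀ (by fun_prop) fun G => by positivity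
  · positivity

lemma tendsto_radialJacobian (ha : 0 < a) (hb : 0 < b) (d : ℕ) :
    Tendsto (radialJacobian a b d) atTop (𝓝 1) := by
  have hy : Tendsto (fun G : ℝ => G ^ 2 / b) atTop atTop :=
    (tendsto_pow_atTop two_ne_zero).atTop_div_const hb
  have hpow : Tendsto (fun y => (1 + a * Real.exp (-y)) ^ d) atTop (𝓝 1) := by
    simpa using ((tendsto_exp_neg_atTop_nhds_zero.const_mul a).const_add 1).pow d
  have hinv : Tendsto (fun y => (1 + 2 * y * (1 + Real.exp y / a)⁻¹)⁻¹) atTop (𝓝 1) := by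
    have hfrac := ((tendsto_div_pow_mul_exp_add_atTop a⁻¹ 1 1 (inv_pos.2 ha).ne).const_mul
      2).const_add 1 |>.inv₀ (by norm_num)
    simpa only [pow_one, mul_zero, add_zero, inv_one, div_eq_mul_inv, mul_assoc,
      mul_comm a⁻¹, add_comm _ (1 : ℝ)] using hfrac
  have hJ := (hpow.comp hy).mul (hinv.comp hy)
  rw [mul_one] at hJ
  refine hJ.congr fun G => ?_
  simp only [Function.comp_apply, radialJacobian, neg_div]

variable {ι : Type*} [Fintype ι] {σ2 : ℝ}

/-- The ratio of the density of `√n(β̃ - β)` to the Gaussian density. Here `z` is the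
standardised second block `S^{1/2} t₂` of the argument and `w` is the same block recentred at
the truth, `S^{1/2} (t₂ + γ)`. -/
def densRatio (a b σ2 : ℝ) (w z : ι → ℝ) : ℝ :=
  radialJacobian a b (Fintype.card ι) (gfun a b (enorm2 w)) *
    Real.exp (-(enorm2 (z + (gdir a b w - w)) ^ 2 - enorm2 z ^ 2) / (2 * σ2))

lemma densRatio_nonneg (ha : 0 ≤ a) (hb : 0 ≤ b) (w z : ι → ℝ) : 0 ≤ densRatio a b σ2 w z :=
  mul_nonneg (radialJacobian_nonneg ha hb _ _) (Real.exp_nonneg _)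

lemma densRatio_le (ha : 0 ≤ a) (hb : 0 < b) (hσ : 0 < σ2) (w z : ι → ℝ) :
    densRatio a b σ2 w z ≤ (1 + a) ^ Fintype.card ι * Real.exp ((a * (1 + b)) ^ 2 / (2 * σ2)) *
      Real.exp (enorm2 z ^ 2 / (4 * σ2)) := by
  set c := a * (1 + b)
  set p := enorm2 (z + (gdir a b w - w))
  have hz : enorm2 z ≤ p + c := calc
    enorm2 z ≤ p + enorm2 (gdir a b w - w) := enorm2_le_enorm2_add _ _
    _ ≤ p + c := by
      rw [enorm2_gdir_sub_self ha hb]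
      gcongr
      exact gfun_sub_self_le_const ha hb (enorm2_nonneg w)
  have hsq : -(p ^ 2 - enorm2 z ^ 2) ≤ c ^ 2 + enorm2 z ^ 2 / 2 := by
    nlinarith [sq_nonneg (p - c), enorm2_nonneg z]
  rw [densRatio, mul_assoc, ← Real.exp_add]
  gcongr
  · exact radialJacobian_le ha hb.le _ _
  · calc -(p ^ 2 - enorm2 z ^ 2) / (2 * σ2)
        ≤ (c ^ 2 + enorm2 z ^ 2 / 2) / (2 * σ2) := by gcongr
      _ = c ^ 2 / (2 * σ2) + enorm2 z ^ 2 / (4 * σ2) := by ring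

lemma measurable_densRatio (ha : 0 ≤ a) (hb : 0 < b) :
    Measurable fun p : (ι → ℝ) × (ι → ℝ) => densRatio a b σ2 p.1 p.2 := by
  have hnorm := (continuous_enorm2 (ι := ι)).measurable
  have hgdir := measurable_gdir (ι := ι) ha hb
  have hJ := (continuous_radialJacobian ha hb.le (Fintype.card ι)).measurable.comp
    ((gfun_monotone ha hb).measurable.comp hnorm)
  exact (hJ.comp measurable_fst).mul (by fun_prop)

lemma tendsto_densRatio (ha : 0 < a) (hb : 0 < b) {I : Type*} {l : Filter I} {w z : I → ι → ℝ}
    (hw : Tendsto (fun i => enorm2 (w i)) l atTop)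
    (hz : IsBoundedUnder (· ≤ ·) l fun i => enorm2 (z i)) :
    Tendsto (fun i => densRatio a b σ2 (w i) (z i)) l (𝓝 1) := by
  have hJ := (tendsto_radialJacobian ha hb (Fintype.card ι)).comp
    ((tendsto_gfun_atTop ha.le hb).comp hw)
  have hd : Tendsto (fun i => enorm2 (gdir a b (w i) - w i)) l (𝓝 0) := by
    simpa only [enorm2_gdir_sub_self ha.le hb, Function.comp_def] using
      (tendsto_gfun_sub_self ha.le hb).comp hw
  obtain ⟨C, hC⟩ := hz.eventually_le
  have hsq : Tendsto (fun i => enorm2 (z i + (gdir a b (w i) - w i)) ^ 2 - enorm2 (z i) ^ 2) l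
      (𝓝 0) := by
    have hbound := hd.mul (hd.const_add (2 * C))
    rw [zero_mul] at hbound
    refine squeeze_zero_norm' (hC.mono fun i hi => ?_) hbound
    have h₁ := enorm2_add_le (z i) (gdir a b (w i) - w i)
    have h₂ := enorm2_le_enorm2_add (z i) (gdir a b (w i) - w i)
    have := enorm2_nonneg (z i)
    have := enorm2_nonneg (gdir a b (w i) - w i)
    have := enorm2_nonneg (z i + (gdir a b (w i) - w i))
    rw [Real.norm_eq_abs, abs_le]
    constructor <;> nlinarith
  have hexp := (Real.continuous_exp.tendsto _).comp (hsq.neg.div_const (2 * σ2))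
  rw [neg_zero, zero_div, Real.exp_zero] at hexp
  exact mul_one (1 : ℝ) ▸ hJ.mul hexp

end DensityRatio

section MatrixSquareRoot

open scoped MatrixOrder

variable {ι : Type*} [Fintype ι] [DecidableEq ι] {A : Matrix ι ι ℝ}

lemma msqrt_eq_sqrt (A : Matrix ι ι ℝ) : msqrt A = CFC.sqrt A := by
  by_cases hA : A.PosSemidef
  · have hsqrt : (fun x : ℝ => ((NNReal.sqrt x.toNNReal : ℝ≥0) : ℝ)) = Real.sqrt := by
      funext x
      rw [Real.sqrt]
    rw [msqrt, dif_pos hA, CFC.sqrt_eq_cfc, cfc_nnreal_eq_real _ A hA.nonneg, hsqrt, hA.1.cfc_eq]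
    rfl
  · rw [msqrt, dif_neg hA, CFC.sqrt_of_not_nonneg (mt nonneg_iff_posSemidef.1 hA)]

lemma msqrt_mul_self (hA : A.PosSemidef) : msqrt A * msqrt A = A := by
  rw [msqrt_eq_sqrt, CFC.sqrt_mul_sqrt_self A hA.nonneg]

lemma msqrt_posSemidef (A : Matrix ι ι ℝ) : (msqrt A).PosSemidef := by
  rw [msqrt_eq_sqrt]
  exact (CFC.sqrt_nonneg A).posSemidef

lemma msqrt_smul (hA : A.PosSemidef) {c : ℝ} (hc : 0 ≤ c) : msqrt (c • A) = √c • msqrt A := by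
  rw [msqrt_eq_sqrt]
  refine CFC.sqrt_unique ?_ ((msqrt_posSemidef A).smul (Real.sqrt_nonneg c)).nonneg
  rw [smul_mul_smul_comm, Real.mul_self_sqrt hc, msqrt_mul_self hA]

lemma enorm2_msqrt_mulVec_sq (hA : A.PosSemidef) (v : ι → ℝ) :
    enorm2 (msqrt A *ᵥ v) ^ 2 = v ⬝ᵥ A *ᵥ v := by
  have hsymm : (msqrt A)ᵀ = msqrt A := (msqrt_posSemidef A).1
  calc enorm2 (msqrt A *ᵥ v) ^ 2 = v ⬝ᵥ (msqrt A)ᵀ *ᵥ (msqrt A *ᵥ v) := by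
        rw [enorm2_sq, dotProduct_mulVec v, vecMul_transpose]
    _ = v ⬝ᵥ A *ᵥ v := by rw [hsymm, mulVec_mulVec, msqrt_mul_self hA]

lemma isUnit_det_msqrt (hA : A.PosDef) : IsUnit (msqrt A).det := by
  refine isUnit_of_mul_isUnit_left (y := (msqrt A).det) ?_
  rw [← det_mul, msqrt_mul_self hA.posSemidef]
  exact hA.det_pos.ne'.isUnit

lemma msqrt_inv (hA : A.PosDef) : (msqrt A)⁻¹ = msqrt A * A⁻¹ := by
  refine inv_eq_right_inv ?_
  rw [← Matrix.mul_assoc, msqrt_mul_self hA.posSemidef,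
    mul_nonsing_inv A hA.det_pos.ne'.isUnit]

end MatrixSquareRoot

section SchurComplement

variable {m l : Type*} {Q : Matrix (m ⊕ l) (m ⊕ l) ℝ}

lemma posDef_toBlocks₁₁ (hQ : Q.PosDef) : Q.toBlocks₁₁.PosDef :=
  hQ.submatrix Sum.inl_injective

lemma fromBlocks_conjTranspose_of_isHermitian (hQ : Q.IsHermitian) :
    fromBlocks Q.toBlocks₁₁ Q.toBlocks₁₂ Q.toBlocks₁₂ᴴ Q.toBlocks₂₂ = Q := by
  have h₂₁ : Q.toBlocks₁₂ᴴ = Q.toBlocks₂₁ := by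
    ext i j
    exact congrFun₂ hQ (Sum.inr i) (Sum.inl j)
  rw [h₂₁, fromBlocks_toBlocks]

variable [Fintype m] [DecidableEq m]

/-- The Schur complement of the upper left block of a block matrix. -/
def schurCompl (Q : Matrix (m ⊕ l) (m ⊕ l) ℝ) : Matrix l l ℝ :=
  Q.toBlocks₂₂ - Q.toBlocks₂₁ * Q.toBlocks₁₁⁻¹ * Q.toBlocks₁₂

lemma schurCompl_eq_of_isHermitian (hQ : Q.IsHermitian) :
    schurCompl Q = Q.toBlocks₂₂ - Q.toBlocks₁₂ᴴ * Q.toBlocks₁₁⁻¹ * Q.toBlocks₁₂ := by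
  rw [← fromBlocks_conjTranspose_of_isHermitian hQ]
  rfl

lemma schurCompl_smul {c : ℝ} (hc : c ≠ 0) (h₁₁ : IsUnit Q.toBlocks₁₁.det) :
    schurCompl (c • Q) = c • schurCompl Q := by
  have hinv : (c • Q.toBlocks₁₁)⁻¹ = c⁻¹ • Q.toBlocks₁₁⁻¹ := inv_smul' _ (Units.mk0 c hc) h₁₁
  calc schurCompl (c • Q)
      = c • Q.toBlocks₂₂ - (c • Q.toBlocks₂₁) * (c • Q.toBlocks₁₁)⁻¹ * (c • Q.toBlocks₁₂) := rfl
    _ = c • schurCompl Q := by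
      simp only [hinv, Matrix.smul_mul, Matrix.mul_smul, smul_smul, inv_mul_cancel₀ hc, mul_one,
        schurCompl, smul_sub]

lemma schurCompl_posSemidef [Finite l] (hQ : Q.PosDef) : (schurCompl Q).PosSemidef := by
  have := Fintype.ofFinite l
  have h₁₁ := posDef_toBlocks₁₁ hQ
  have := h₁₁.isUnit.invertible
  rw [schurCompl_eq_of_isHermitian hQ.1, ← PosDef.fromBlocks₁₁ _ _ h₁₁,
    fromBlocks_conjTranspose_of_isHermitian hQ.1]
  exact hQ.posSemidef

variable [Fintype l] [DecidableEq l]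

lemma dotProduct_mulVec_eq_enorm2_msqrt_sq_add (hQ : Q.PosDef) (t : m ⊕ l → ℝ) :
    t ⬝ᵥ Q *ᵥ t =
      enorm2 (msqrt Q.toBlocks₁₁ *ᵥ (t ∘ Sum.inl) +
        ((msqrt Q.toBlocks₁₁)⁻¹ * Q.toBlocks₁₂) *ᵥ (t ∘ Sum.inr)) ^ 2 +
      enorm2 (msqrt (schurCompl Q) *ᵥ (t ∘ Sum.inr)) ^ 2 := by
  have h₁₁ := posDef_toBlocks₁₁ hQ
  have := h₁₁.isUnit.invertible
  have hsquare :=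
    schur_complement_eq₁₁ Q.toBlocks₁₂ Q.toBlocks₂₂ (t ∘ Sum.inl) (t ∘ Sum.inr) h₁₁.1
  rw [fromBlocks_conjTranspose_of_isHermitian hQ.1,
    ← schurCompl_eq_of_isHermitian hQ.1] at hsquare
  simp only [Sum.elim_comp_inl_inr, star_trivial, ← dotProduct_mulVec] at hsquare
  rw [hsquare, msqrt_inv h₁₁, Matrix.mul_assoc, ← mulVec_mulVec _ (msqrt Q.toBlocks₁₁),
    ← mulVec_add, enorm2_msqrt_mulVec_sq h₁₁.posSemidef,
    enorm2_msqrt_mulVec_sq (schurCompl_posSemidef hQ)]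

lemma enorm2_msqrt_schurCompl_sq_le (hQ : Q.PosDef) (t : m ⊕ l → ℝ) :
    enorm2 (msqrt (schurCompl Q) *ᵥ (t ∘ Sum.inr)) ^ 2 ≤ t ⬝ᵥ Q *ᵥ t := by
  rw [dotProduct_mulVec_eq_enorm2_msqrt_sq_add hQ]
  exact le_add_of_nonneg_left (sq_nonneg _)

lemma le_enorm2_msqrt_schurCompl_sq (hQ : Q.PosDef) {c : ℝ} (hc : 0 ≤ c)
    (hcoercive : ∀ t, c * (t ⬝ᵥ t) ≤ t ⬝ᵥ Q *ᵥ t) (v : l → ℝ) :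
    c * (v ⬝ᵥ v) ≤ enorm2 (msqrt (schurCompl Q) *ᵥ v) ^ 2 := by
  set x := -(Q.toBlocks₁₁⁻¹ * Q.toBlocks₁₂) *ᵥ v
  have hmin : Sum.elim x v ⬝ᵥ Q *ᵥ Sum.elim x v = enorm2 (msqrt (schurCompl Q) *ᵥ v) ^ 2 := by
    have hx : msqrt Q.toBlocks₁₁ *ᵥ x + ((msqrt Q.toBlocks₁₁)⁻¹ * Q.toBlocks₁₂) *ᵥ v = 0 := by
      rw [msqrt_inv (posDef_toBlocks₁₁ hQ), mulVec_mulVec, ← add_mulVec, Matrix.mul_neg,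
        Matrix.mul_assoc, neg_add_cancel, zero_mulVec]
    rw [dotProduct_mulVec_eq_enorm2_msqrt_sq_add hQ, Sum.elim_comp_inl, Sum.elim_comp_inr, hx,
      enorm2_eq_zero.2 rfl, zero_pow two_ne_zero, zero_add]
  calc c * (v ⬝ᵥ v) ≤ c * (Sum.elim x v ⬝ᵥ Sum.elim x v) := by
        rw [sumElim_dotProduct_sumElim, ← enorm2_sq x]
        gcongr
        exact le_add_of_nonneg_left (sq_nonneg _)
    _ ≤ enorm2 (msqrt (schurCompl Q) *ᵥ v) ^ 2 := hmin ▸ hcoercive _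

end SchurComplement

section Coercivity

variable {ι : Type*} [Fintype ι]

lemma isCompact_setOf_enorm2_eq (r : ℝ) : IsCompact {t : ι → ℝ | enorm2 t = r} := by
  have hpreimage : {t : ι → ℝ | enorm2 t = r} =
      (PiLp.homeomorph 2 fun _ : ι => ℝ).symm ⁻¹' Metric.sphere 0 r := by
    ext t
    simp only [enorm2_eq_norm_toLp, Set.mem_ofPred_eq, Set.mem_preimage, mem_sphere_zero_iff_norm]
    rfl
  rw [hpreimage, Homeomorph.isCompact_preimage]
  exact isCompact_sphere _ _

lemma exists_eventually_forall_mul_dotProduct_le {Q : Matrix ι ι ℝ} (hQ : Q.PosDef) :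
    ∃ c > 0, ∀ᶠ M in 𝓝 Q, ∀ t : ι → ℝ, c * (t ⬝ᵥ t) ≤ t ⬝ᵥ M *ᵥ t := by
  have hpoint : ∀ t ∈ {t : ι → ℝ | enorm2 t = 1}, ∀ᶠ p : (ℝ × Matrix ι ι ℝ) × (ι → ℝ) in
      𝓝 ((0, Q), t), p.1.1 < p.2 ⬝ᵥ p.1.2 *ᵥ p.2 := by
    intro t (ht : enorm2 t = 1)
    have ht0 : t ≠ 0 := fun h => by simp [enorm2_eq_zero.2 h] at ht
    have hcont : Continuous fun p : (ℝ × Matrix ι ι ℝ) × (ι → ℝ) => p.2 ⬝ᵥ p.1.2 *ᵥ p.2 := by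
      fun_prop
    exact (continuous_fst.fst.tendsto _).eventually_lt (hcont.tendsto _)
      (hQ.dotProduct_mulVec_pos ht0)
  have hsphere : ∀ᶠ c in 𝓝[>] (0 : ℝ), ∀ᶠ M in 𝓝 Q,
      ∀ t ∈ {t : ι → ℝ | enorm2 t = 1}, c < t ⬝ᵥ M *ᵥ t := by
    have := (isCompact_setOf_enorm2_eq 1).eventually_forall_of_forall_eventually
      (P := fun (p : ℝ × Matrix ι ι ℝ) t => p.1 < t ⬝ᵥ p.2 *ᵥ t) hpoint
    rw [nhds_prod_eq] at this
    exact this.curry.filter_mono nhdsWithin_le_nhds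
  obtain ⟨c, hcM, hc⟩ := (hsphere.and self_mem_nhdsWithin).exists
  refine ⟨c, hc, hcM.mono fun M hM t => ?_⟩
  rcases eq_or_ne t 0 with rfl | ht
  · simp
  have hr : 0 < enorm2 t := (enorm2_nonneg t).lt_of_ne' (mt enorm2_eq_zero.1 ht)
  have hunit := hM ((enorm2 t)⁻¹ • t) (by
    rw [Set.mem_ofPred_eq, enorm2_smul, abs_of_pos (inv_pos.2 hr), inv_mul_cancel₀ hr.ne'])
  rw [mulVec_smul, smul_dotProduct, dotProduct_smul, smul_eq_mul, smul_eq_mul, ← mul_assoc,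
    ← mul_inv, ← sq, enorm2_sq, lt_inv_mul_iff₀ (enorm2_sq t ▸ by positivity)] at hunit
  linarith

lemma posDef_of_forall_mul_dotProduct_le {M : Matrix ι ι ℝ} (hM : M.IsHermitian) {c : ℝ}
    (hc : 0 < c) (hcoercive : ∀ t : ι → ℝ, c * (t ⬝ᵥ t) ≤ t ⬝ᵥ M *ᵥ t) : M.PosDef := by
  refine .of_dotProduct_mulVec_pos hM fun t ht => ?_
  have : 0 < enorm2 t := (enorm2_nonneg t).lt_of_ne' (mt enorm2_eq_zero.1 ht)
  calc 0 < c * (t ⬝ᵥ t) := by rw [← enorm2_sq]; positivity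
    _ ≤ star t ⬝ᵥ M *ᵥ t := hcoercive t

end Coercivity

section Factorization

variable {Q : Matrix (Fin k₁ ⊕ Fin k₂) (Fin k₁ ⊕ Fin k₂) ℝ}

lemma radialJacobian_exp (σ2 α : ℝ) (d : ℕ) (G : ℝ) :
    radialJacobian (Real.exp (2 * α * d)) (σ2 / α) d G =
      (1 + Real.exp (-(α / σ2) * G ^ 2 + 2 * α * d)) ^ d *
        (1 + (2 * α / σ2) * G ^ 2 * (1 + Real.exp ((α / σ2) * G ^ 2 - 2 * α * d))⁻¹)⁻¹ := by
  have hdiv : G ^ 2 / (σ2 / α) = α / σ2 * G ^ 2 := by rw [div_div_eq_mul_div]; ring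
  rw [radialJacobian, neg_div, hdiv, Real.exp_sub, Real.exp_add]
  ring_nf

lemma fInfty_eq_gaussCovDens_mul_densRatio (hQ : Q.PosDef) (σ2 α : ℝ) (γ : Fin k₂ → ℝ)
    (t : Fin k₁ ⊕ Fin k₂ → ℝ) :
    fInfty Q σ2 α γ t = gaussCovDens σ2 Q t *
      densRatio (Real.exp (2 * α * k₂)) (σ2 / α) σ2 (msqrt (schurCompl Q) *ᵥ (t ∘ Sum.inr + γ))
        (msqrt (schurCompl Q) *ᵥ (t ∘ Sum.inr)) := by
  set S := schurCompl Q
  set w := msqrt S *ᵥ (t ∘ Sum.inr + γ) with hw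
  set z := msqrt S *ᵥ (t ∘ Sum.inr)
  set u := msqrt Q.toBlocks₁₁ *ᵥ (t ∘ Sum.inl) +
    ((msqrt Q.toBlocks₁₁)⁻¹ * Q.toBlocks₁₂) *ᵥ (t ∘ Sum.inr)
  set a := Real.exp (2 * α * k₂)
  set b := σ2 / α
  set G := gfun a b (enorm2 w)
  have hquad : t ⬝ᵥ Q *ᵥ t = enorm2 u ^ 2 + enorm2 z ^ 2 :=
    dotProduct_mulVec_eq_enorm2_msqrt_sq_add hQ t
  have hshift : gdir a b w - msqrt S *ᵥ γ = z + (gdir a b w - w) := by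
    rw [hw, mulVec_add]
    abel
  have hexponents : Real.exp (-enorm2 u ^ 2 / (2 * σ2)) *
        Real.exp (-enorm2 (gdir a b w - msqrt S *ᵥ γ) ^ 2 / (2 * σ2)) =
      Real.exp (-(t ⬝ᵥ Q *ᵥ t) / (2 * σ2)) *
        Real.exp (-(enorm2 (z + (gdir a b w - w)) ^ 2 - enorm2 z ^ 2) / (2 * σ2)) := by
    rw [← Real.exp_add, ← Real.exp_add, hshift, hquad]
    ring_nf
  have hcard : -((k₁ : ℝ) + k₂) / 2 = -(Fintype.card (Fin k₁ ⊕ Fin k₂) : ℝ) / 2 := by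
    rw [Fintype.card_sum, Fintype.card_fin, Fintype.card_fin, Nat.cast_add]
  calc fInfty Q σ2 α γ t
      = (2 * π * σ2) ^ (-((k₁ : ℝ) + k₂) / 2) * √Q.det * Real.exp (-enorm2 u ^ 2 / (2 * σ2)) *
          (1 + Real.exp (-(α / σ2) * G ^ 2 + 2 * α * k₂)) ^ k₂ *
          (1 + (2 * α / σ2) * G ^ 2 * (1 + Real.exp ((α / σ2) * G ^ 2 - 2 * α * k₂))⁻¹)⁻¹ *
          Real.exp (-enorm2 (gdir a b w - msqrt S *ᵥ γ) ^ 2 / (2 * σ2)) := rfl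
    _ = (2 * π * σ2) ^ (-((k₁ : ℝ) + k₂) / 2) * √Q.det * (Real.exp (-enorm2 u ^ 2 / (2 * σ2)) *
          Real.exp (-enorm2 (gdir a b w - msqrt S *ᵥ γ) ^ 2 / (2 * σ2))) *
          ((1 + Real.exp (-(α / σ2) * G ^ 2 + 2 * α * k₂)) ^ k₂ *
            (1 + (2 * α / σ2) * G ^ 2 *
              (1 + Real.exp ((α / σ2) * G ^ 2 - 2 * α * k₂))⁻¹)⁻¹) := by
        ring
    _ = gaussCovDens σ2 Q t * densRatio a b σ2 w z := by
        rw [hexponents, hcard, gaussCovDens, densRatio, Fintype.card_fin, radialJacobian_exp]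
        ring

lemma schurCompl_gram (X : Matrix (Fin n) (Fin k₁ ⊕ Fin k₂) ℝ) :
    schurCompl (Xᵀ * X) = (X2 X)ᵀ * (1 - projR X) * X2 X := by
  calc schurCompl (Xᵀ * X)
      = (X2 X)ᵀ * X2 X - (X2 X)ᵀ * X1 X * ((X1 X)ᵀ * X1 X)⁻¹ * ((X1 X)ᵀ * X2 X) := rfl
    _ = (X2 X)ᵀ * (1 - projR X) * X2 X := by
      simp only [projR, Matrix.mul_sub, Matrix.sub_mul, Matrix.mul_one, Matrix.mul_assoc]

lemma fdens_eq_fInfty (X : Matrix (Fin n) (Fin k₁ ⊕ Fin k₂) ℝ) (hn : n ≠ 0)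
    (hX : (Xᵀ * X).PosDef) (β : Fin k₁ ⊕ Fin k₂ → ℝ) (σ2 α : ℝ) :
    fdens X β σ2 α = fInfty ((n : ℝ)⁻¹ • (Xᵀ * X)) σ2 α (√n • (β ∘ Sum.inr)) := by
  have hc : (0 : ℝ) < (n : ℝ)⁻¹ := by positivity
  have hs : 0 < √(n : ℝ) := by positivity
  have h₁₁ : ((X1 X)ᵀ * X1 X).PosDef := posDef_toBlocks₁₁ hX
  have hschur : msqrt (schurCompl ((n : ℝ)⁻¹ • (Xᵀ * X))) =
      (√n)⁻¹ • msqrt ((X2 X)ᵀ * (1 - projR X) * X2 X) := by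
    rw [schurCompl_smul hc.ne' h₁₁.det_pos.ne'.isUnit,
      msqrt_smul (schurCompl_posSemidef hX) hc.le, Real.sqrt_inv, schurCompl_gram]
  have hblock : msqrt ((n : ℝ)⁻¹ • (Xᵀ * X)).toBlocks₁₁ = (√n)⁻¹ • msqrt ((X1 X)ᵀ * X1 X) := by
    rw [← Real.sqrt_inv, ← msqrt_smul h₁₁.posSemidef hc.le]
    rfl
  have hcross : ((√n)⁻¹ • msqrt ((X1 X)ᵀ * X1 X))⁻¹ * ((n : ℝ)⁻¹ • (Xᵀ * X)).toBlocks₁₂ =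
      (√n)⁻¹ • ((msqrt ((X1 X)ᵀ * X1 X))⁻¹ * (X1 X)ᵀ * X2 X) := by
    have hinv : ((√n)⁻¹ • msqrt ((X1 X)ᵀ * X1 X))⁻¹ = √n • (msqrt ((X1 X)ᵀ * X1 X))⁻¹ :=
      inv_smul' _ (Units.mk0 √n hs.ne')⁻¹ (isUnit_det_msqrt h₁₁)
    have h₁₂ : ((n : ℝ)⁻¹ • (Xᵀ * X)).toBlocks₁₂ = (n : ℝ)⁻¹ • ((X1 X)ᵀ * X2 X) := rfl
    have hscale : √n * (n : ℝ)⁻¹ = (√n)⁻¹ := by rw [← div_eq_mul_inv, Real.sqrt_div_self]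
    rw [hinv, h₁₂, Matrix.smul_mul, Matrix.mul_smul, smul_smul, hscale, Matrix.mul_assoc]
  funext t
  simp only [fdens, fInfty, ← schurCompl.eq_1, hschur, hblock, hcross, smul_mulVec, mulVec_smul,
    smul_add, smul_smul, mul_inv_cancel₀ hs.ne', one_smul]

end Factorization

section GaussianDensity

variable {ι : Type*} [Fintype ι]

lemma exp_neg_mul_dotProduct_self (c : ℝ) (t : ι → ℝ) :
    Real.exp (-c * (t ⬝ᵥ t)) = ∏ i, Real.exp (-c * t i ^ 2) := by
  simp only [← Real.exp_sum, ← Finset.mul_sum, dotProduct, sq]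

lemma integrable_exp_neg_mul_dotProduct_self {c : ℝ} (hc : 0 < c) :
    Integrable fun t : ι → ℝ => Real.exp (-c * (t ⬝ᵥ t)) := by
  simp only [exp_neg_mul_dotProduct_self]
  exact .fintype_prod fun _ => integrable_exp_neg_mul_sq hc

lemma isProbabilityMeasure_gaussPi {σ2 : ℝ} (hσ : 0 < σ2) :
    IsProbabilityMeasure (gaussPi ι σ2) := by
  have hc : 0 < 1 / (2 * σ2) := by positivity
  have hexp (x : ι → ℝ) : Real.exp (-enorm2 x ^ 2 / (2 * σ2)) =
      Real.exp (-(1 / (2 * σ2)) * (x ⬝ᵥ x)) := by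
    rw [enorm2_sq]
    ring_nf
  have hintegral : ∫ x : ι → ℝ, Real.exp (-(1 / (2 * σ2)) * (x ⬝ᵥ x)) =
      (2 * π * σ2) ^ ((Fintype.card ι : ℝ) / 2) := by
    simp only [exp_neg_mul_dotProduct_self]
    rw [integral_fintype_prod_volume_eq_pow fun y : ℝ => Real.exp (-(1 / (2 * σ2)) * y ^ 2),
      integral_gaussian, div_div_eq_mul_div, div_one, Real.rpow_div_two_eq_sqrt _ (by positivity),
      Real.rpow_natCast]
    ring_nf
  constructor
  rw [gaussPi, withDensity_apply _ .univ, Measure.restrict_univ]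
  simp only [hexp]
  rw [← ofReal_integral_eq_lintegral_ofReal
      ((integrable_exp_neg_mul_dotProduct_self hc).const_mul _)
      (.of_forall fun x => by positivity), integral_const_mul, hintegral,
    ← Real.rpow_add (by positivity), neg_div, neg_add_cancel, Real.rpow_zero, ENNReal.ofReal_one]

lemma isProbabilityMeasure_Pmeas (X : Matrix (Fin n) (Fin k₁ ⊕ Fin k₂) ℝ)
    (β : Fin k₁ ⊕ Fin k₂ → ℝ) {σ2 : ℝ} (hσ : 0 < σ2) : IsProbabilityMeasure (Pmeas X β σ2) :=
  have := isProbabilityMeasure_gaussPi (ι := Fin n) hσ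
  Measure.isProbabilityMeasure_map (by fun_prop)

variable [DecidableEq ι] {σ2 : ℝ}

lemma gaussCovDens_nonneg (hσ : 0 ≤ σ2) (Q : Matrix ι ι ℝ) (t : ι → ℝ) :
    0 ≤ gaussCovDens σ2 Q t := by
  unfold gaussCovDens
  positivity

lemma continuous_gaussCovDens :
    Continuous fun p : Matrix ι ι ℝ × (ι → ℝ) => gaussCovDens σ2 p.1 p.2 := by
  unfold gaussCovDens
  fun_prop

lemma gaussCovDens_mul_exp_le (hσ : 0 < σ2) {Q : Matrix ι ι ℝ} {c : ℝ} {t : ι → ℝ}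
    (hcoercive : c * (t ⬝ᵥ t) ≤ t ⬝ᵥ Q *ᵥ t) :
    gaussCovDens σ2 Q t * Real.exp (t ⬝ᵥ Q *ᵥ t / (4 * σ2)) ≤
      (2 * π * σ2) ^ (-(Fintype.card ι : ℝ) / 2) * √Q.det *
        Real.exp (-(c / (4 * σ2)) * (t ⬝ᵥ t)) := by
  rw [gaussCovDens, mul_assoc, ← Real.exp_add]
  gcongr
  calc -(t ⬝ᵥ Q *ᵥ t) / (2 * σ2) + t ⬝ᵥ Q *ᵥ t / (4 * σ2) = -(t ⬝ᵥ Q *ᵥ t) / (4 * σ2) := by ring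
    _ ≤ -(c * (t ⬝ᵥ t)) / (4 * σ2) := by gcongr
    _ = -(c / (4 * σ2)) * (t ⬝ᵥ t) := by ring

lemma gaussCovDens_le_mul_exp (hσ : 0 ≤ σ2) {Q : Matrix ι ι ℝ} (hQ : Q.PosSemidef) (t : ι → ℝ) :
    gaussCovDens σ2 Q t ≤ gaussCovDens σ2 Q t * Real.exp (t ⬝ᵥ Q *ᵥ t / (4 * σ2)) :=
  le_mul_of_one_le_right (gaussCovDens_nonneg hσ Q t)
    (Real.one_le_exp (div_nonneg (hQ.dotProduct_mulVec_nonneg t) (by positivity)))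

lemma integrable_gaussCovDens_mul_exp (hσ : 0 < σ2) {Q : Matrix ι ι ℝ} (hQ : Q.PosDef) :
    Integrable fun t => gaussCovDens σ2 Q t * Real.exp (t ⬝ᵥ Q *ᵥ t / (4 * σ2)) := by
  obtain ⟨c, hc, hcoercive⟩ := exists_eventually_forall_mul_dotProduct_le hQ
  have hg : Continuous (gaussCovDens σ2 Q) :=
    continuous_gaussCovDens.comp (.prodMk_right Q)
  have hdom := (integrable_exp_neg_mul_dotProduct_self (ι := ι)
    (by positivity : 0 < c / (4 * σ2))).const_mul
    ((2 * π * σ2) ^ (-(Fintype.card ι : ℝ) / 2) * √Q.det)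
  refine hdom.mono' (by fun_prop) (.of_forall fun t => ?_)
  rw [Real.norm_of_nonneg (mul_nonneg (gaussCovDens_nonneg hσ.le Q t) (Real.exp_nonneg _))]
  exact gaussCovDens_mul_exp_le hσ (hcoercive.self_of_nhds t)

lemma integrable_gaussCovDens (hσ : 0 < σ2) {Q : Matrix ι ι ℝ} (hQ : Q.PosDef) :
    Integrable (gaussCovDens σ2 Q) := by
  have hg : Continuous (gaussCovDens σ2 Q) :=
    continuous_gaussCovDens.comp (.prodMk_right Q)
  refine (integrable_gaussCovDens_mul_exp hσ hQ).mono' (by fun_prop) (.of_forall fun t => ?_)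
  rw [Real.norm_of_nonneg (gaussCovDens_nonneg hσ.le Q t)]
  exact gaussCovDens_le_mul_exp hσ.le hQ.posSemidef t

end GaussianDensity

section AveragedDensity

variable {Q : Matrix (Fin k₁ ⊕ Fin k₂) (Fin k₁ ⊕ Fin k₂) ℝ} {σ2 α : ℝ}

lemma fInfty_nonneg (hσ : 0 ≤ σ2) (hα : 0 ≤ α) (hQ : Q.PosDef) (γ : Fin k₂ → ℝ)
    (t : Fin k₁ ⊕ Fin k₂ → ℝ) : 0 ≤ fInfty Q σ2 α γ t := by
  rw [fInfty_eq_gaussCovDens_mul_densRatio hQ]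
  exact mul_nonneg (gaussCovDens_nonneg hσ Q t)
    (densRatio_nonneg (Real.exp_nonneg _) (div_nonneg hσ hα) _ _)

lemma measurable_fInfty (hσ : 0 < σ2) (hα : 0 < α) (hQ : Q.PosDef) (γ : Fin k₂ → ℝ) :
    Measurable (fInfty Q σ2 α γ) := by
  have hg : Continuous (gaussCovDens σ2 Q) :=
    continuous_gaussCovDens.comp (.prodMk_right Q)
  have hw : Continuous fun t : Fin k₁ ⊕ Fin k₂ → ℝ =>
      msqrt (schurCompl Q) *ᵥ (t ∘ Sum.inr + γ) := by fun_prop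
  have hz : Continuous fun t : Fin k₁ ⊕ Fin k₂ → ℝ =>
      msqrt (schurCompl Q) *ᵥ (t ∘ Sum.inr) := by fun_prop
  have hratio := (measurable_densRatio (σ2 := σ2) (Real.exp_nonneg (2 * α * k₂))
    (div_pos hσ hα)).comp (hw.measurable.prodMk hz.measurable)
  rw [show fInfty Q σ2 α γ = _ from funext (fInfty_eq_gaussCovDens_mul_densRatio hQ σ2 α γ)]
  exact hg.measurable.mul hratio

lemma exists_fInfty_le (k₁ k₂ : ℕ) (hσ : 0 < σ2) (hα : 0 < α) :
    ∃ K ≥ 0, ∀ Q : Matrix (Fin k₁ ⊕ Fin k₂) (Fin k₁ ⊕ Fin k₂) ℝ, Q.PosDef → ∀ γ t,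
      fInfty Q σ2 α γ t ≤ K * (gaussCovDens σ2 Q t * Real.exp (t ⬝ᵥ Q *ᵥ t / (4 * σ2))) := by
  set a := Real.exp (2 * α * k₂)
  have ha : 0 ≤ a := Real.exp_nonneg _
  refine ⟨(1 + a) ^ Fintype.card (Fin k₂) * Real.exp ((a * (1 + σ2 / α)) ^ 2 / (2 * σ2)),
    by positivity, fun Q hQ γ t => ?_⟩
  have hg := gaussCovDens_nonneg hσ.le Q t
  rw [fInfty_eq_gaussCovDens_mul_densRatio hQ, mul_left_comm]
  gcongr
  refine (densRatio_le ha (div_pos hσ hα) hσ _ _).trans ?_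
  gcongr
  exact enorm2_msqrt_schurCompl_sq_le hQ t

lemma integrable_fInfty (hσ : 0 < σ2) (hα : 0 < α) (hQ : Q.PosDef) (γ : Fin k₂ → ℝ) :
    Integrable (fInfty Q σ2 α γ) := by
  obtain ⟨K, -, hK⟩ := exists_fInfty_le k₁ k₂ hσ hα
  refine ((integrable_gaussCovDens_mul_exp hσ hQ).const_mul K).mono'
    (measurable_fInfty hσ hα hQ γ).aestronglyMeasurable (.of_forall fun t => ?_)
  rw [Real.norm_of_nonneg (fInfty_nonneg hσ.le hα.le hQ γ t)]
  exact hK Q hQ γ t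

end AveragedDensity

section MeanConvergence

variable {m l : Type*} [Fintype m] [DecidableEq m] [Fintype l] [DecidableEq l]
  {I : Type*} {F : Filter I}

lemma tendsto_enorm2_msqrt_schurCompl_mulVec_add {Q : Matrix (m ⊕ l) (m ⊕ l) ℝ} (hQ : Q.PosDef)
    {Qs : I → Matrix (m ⊕ l) (m ⊕ l) ℝ} (hlim : Tendsto Qs F (𝓝 Q))
    (hpos : ∀ᶠ i in F, (Qs i).PosDef) {γ : I → l → ℝ}
    (hγ : Tendsto (fun i => enorm2 (γ i)) F atTop) (v : l → ℝ) :
    Tendsto (fun i => enorm2 (msqrt (schurCompl (Qs i)) *ᵥ (v + γ i))) F atTop := by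
  obtain ⟨c, hc, hcoercive⟩ := exists_eventually_forall_mul_dotProduct_le hQ
  have hlower : Tendsto (fun i => √c * (enorm2 (γ i) - enorm2 v)) F atTop :=
    (tendsto_atTop_add_const_right _ _ hγ).const_mul_atTop (by positivity)
  refine tendsto_atTop_mono' _ ?_ hlower
  filter_upwards [hpos, hlim.eventually hcoercive] with i hQi hci
  have hγv : enorm2 (γ i) - enorm2 v ≤ enorm2 (v + γ i) := by
    rw [sub_le_iff_le_add, add_comm v]
    exact enorm2_le_enorm2_add _ _
  have hschur := le_enorm2_msqrt_schurCompl_sq hQi hc.le hci (v + γ i)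
  calc √c * (enorm2 (γ i) - enorm2 v) ≤ √c * enorm2 (v + γ i) := by gcongr
    _ ≤ enorm2 (msqrt (schurCompl (Qs i)) *ᵥ (v + γ i)) := by
      refine (sq_le_sq₀ (mul_nonneg (Real.sqrt_nonneg c) (enorm2_nonneg _))
        (enorm2_nonneg _)).1 ?_
      rwa [mul_pow, Real.sq_sqrt hc.le, enorm2_sq]

lemma isBoundedUnder_enorm2_msqrt_schurCompl_mulVec {Q : Matrix (m ⊕ l) (m ⊕ l) ℝ}
    {Qs : I → Matrix (m ⊕ l) (m ⊕ l) ℝ} (hlim : Tendsto Qs F (𝓝 Q))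
    (hpos : ∀ᶠ i in F, (Qs i).PosDef) (t : m ⊕ l → ℝ) :
    IsBoundedUnder (· ≤ ·) F fun i => enorm2 (msqrt (schurCompl (Qs i)) *ᵥ (t ∘ Sum.inr)) := by
  have hquad : Tendsto (fun i => √(t ⬝ᵥ Qs i *ᵥ t)) F (𝓝 √(t ⬝ᵥ Q *ᵥ t)) :=
    ((by fun_prop : Continuous fun M : Matrix (m ⊕ l) (m ⊕ l) ℝ => √(t ⬝ᵥ M *ᵥ t)).tendsto Q).comp
      hlim
  exact hquad.isBoundedUnder_le.mono_le
    (hpos.mono fun i hi => Real.le_sqrt_of_sq_le (enorm2_msqrt_schurCompl_sq_le hi t))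

variable {Q : Matrix (Fin k₁ ⊕ Fin k₂) (Fin k₁ ⊕ Fin k₂) ℝ} {σ2 α : ℝ}
  {Qs : I → Matrix (Fin k₁ ⊕ Fin k₂) (Fin k₁ ⊕ Fin k₂) ℝ} {γ : I → Fin k₂ → ℝ}

lemma tendsto_gaussCovDens_sub_fInfty (hσ : 0 < σ2) (hα : 0 < α) (hQ : Q.PosDef)
    (hlim : Tendsto Qs F (𝓝 Q)) (hpos : ∀ᶠ i in F, (Qs i).PosDef)
    (hγ : Tendsto (fun i => enorm2 (γ i)) F atTop) (t : Fin k₁ ⊕ Fin k₂ → ℝ) :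
    Tendsto (fun i => gaussCovDens σ2 (Qs i) t - fInfty (Qs i) σ2 α (γ i) t) F (𝓝 0) := by
  have hcont : Continuous fun M => gaussCovDens σ2 M t :=
    continuous_gaussCovDens.comp (.prodMk_left t)
  have hgauss := (hcont.tendsto Q).comp hlim
  have hratio := tendsto_densRatio (σ2 := σ2) (Real.exp_pos (2 * α * k₂)) (div_pos hσ hα)
    (tendsto_enorm2_msqrt_schurCompl_mulVec_add hQ hlim hpos hγ (t ∘ Sum.inr))
    (isBoundedUnder_enorm2_msqrt_schurCompl_mulVec hlim hpos t)
  have hdiff := hgauss.sub (hgauss.mul hratio)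
  rw [mul_one, sub_self] at hdiff
  refine hdiff.congr' (hpos.mono fun i hi => ?_)
  simp only [Function.comp_apply, fInfty_eq_gaussCovDens_mul_densRatio hi]

lemma exists_integrable_forall_abs_gaussCovDens_sub_fInfty_le (hσ : 0 < σ2) (hα : 0 < α)
    (hQ : Q.PosDef) : ∃ dom : (Fin k₁ ⊕ Fin k₂ → ℝ) → ℝ, Integrable dom ∧
      ∀ᶠ M in 𝓝 Q, M.PosDef → ∀ γ t, |gaussCovDens σ2 M t - fInfty M σ2 α γ t| ≤ dom t := by
  obtain ⟨c, hc, hcoercive⟩ := exists_eventually_forall_mul_dotProduct_le hQ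
  obtain ⟨K, hK, hfInfty⟩ := exists_fInfty_le k₁ k₂ hσ hα
  set C := (2 * π * σ2) ^ (-(Fintype.card (Fin k₁ ⊕ Fin k₂) : ℝ) / 2) * (√Q.det + 1)
  have hdet : ∀ᶠ M in 𝓝 Q, √M.det < √Q.det + 1 :=
    ((by fun_prop : Continuous fun M : Matrix (Fin k₁ ⊕ Fin k₂) (Fin k₁ ⊕ Fin k₂) ℝ =>
      √M.det).tendsto Q).eventually_lt_const (lt_add_one _)
  refine ⟨fun t => (1 + K) * (C * Real.exp (-(c / (4 * σ2)) * (t ⬝ᵥ t))),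
    ((integrable_exp_neg_mul_dotProduct_self (by positivity)).const_mul C).const_mul _, ?_⟩
  filter_upwards [hcoercive, hdet] with M hcM hdetM hM γ t
  set h := gaussCovDens σ2 M t * Real.exp (t ⬝ᵥ M *ᵥ t / (4 * σ2))
  have hg₀ : 0 ≤ gaussCovDens σ2 M t := gaussCovDens_nonneg hσ.le M t
  have hg : gaussCovDens σ2 M t ≤ h := gaussCovDens_le_mul_exp hσ.le hM.posSemidef t
  have hf₀ : 0 ≤ fInfty M σ2 α γ t := fInfty_nonneg hσ.le hα.le hM γ t
  have hf : fInfty M σ2 α γ t ≤ K * h := hfInfty M hM γ t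
  calc |gaussCovDens σ2 M t - fInfty M σ2 α γ t| ≤ (1 + K) * h := by
        rw [abs_le]
        constructor <;> linarith
    _ ≤ (1 + K) * (C * Real.exp (-(c / (4 * σ2)) * (t ⬝ᵥ t))) := by
        gcongr
        refine (gaussCovDens_mul_exp_le hσ (hcM t)).trans ?_
        gcongr ?_ * _
        exact mul_le_mul_of_nonneg_left hdetM.le (by positivity)

lemma tendsto_integral_abs_gaussCovDens_sub_fInfty [F.IsCountablyGenerated] (hσ : 0 < σ2)
    (hα : 0 < α) (hQ : Q.PosDef) (hlim : Tendsto Qs F (𝓝 Q)) (hpos : ∀ᶠ i in F, (Qs i).PosDef)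
    (hγ : Tendsto (fun i => enorm2 (γ i)) F atTop) :
    Tendsto (fun i => ∫ t, |gaussCovDens σ2 (Qs i) t - fInfty (Qs i) σ2 α (γ i) t|) F (𝓝 0) := by
  obtain ⟨dom, hdom, hle⟩ := exists_integrable_forall_abs_gaussCovDens_sub_fInfty_le hσ hα hQ
  rw [← integral_zero (Fin k₁ ⊕ Fin k₂ → ℝ) ℝ]
  refine tendsto_integral_filter_of_dominated_convergence dom ?_ ?_ hdom (.of_forall fun t => ?_)
  · refine hpos.mono fun i hi => ?_
    exact ((integrable_gaussCovDens hσ hi).sub (integrable_fInfty hσ hα hi _)).abs.1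
  · filter_upwards [hpos, hlim.eventually hle] with i hi hlei
    exact .of_forall fun t => (abs_abs _).trans_le (hlei hi (γ i) t)
  · simpa only [abs_zero] using (tendsto_gaussCovDens_sub_fInfty hσ hα hQ hlim hpos hγ t).abs

end MeanConvergence

section Probability

lemma iSup_abs_setIntegral_sub_le {Ω : Type*} [MeasurableSpace Ω] {μ : Measure Ω} {f g : Ω → ℝ}
    (hf : Integrable f μ) (hg : Integrable g μ) :
    ⨆ s : Set Ω, ⨆ _ : MeasurableSet s, |∫ x in s, f x ∂μ - ∫ x in s, g x ∂μ| ≤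
      ∫ x, |f x - g x| ∂μ := by
  have hL1 : 0 ≤ ∫ x, |f x - g x| ∂μ := integral_nonneg fun x => abs_nonneg _
  refine Real.iSup_le (fun s => Real.iSup_le (fun _ => ?_) hL1) hL1
  calc |∫ x in s, f x ∂μ - ∫ x in s, g x ∂μ| = |∫ x in s, (f x - g x) ∂μ| := by
        rw [integral_sub hf.integrableOn hg.integrableOn]
    _ ≤ ∫ x in s, |f x - g x| ∂μ := abs_integral_le_integral_abs
    _ ≤ ∫ x, |f x - g x| ∂μ :=
        setIntegral_le_integral (hf.sub hg).abs (.of_forall fun x => abs_nonneg _)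

lemma tendsto_measure_zero_of_eventually_disjoint {I : Type*} {F : Filter I} {Ω : I → Type*}
    [∀ i, MeasurableSpace (Ω i)] {μ : ∀ i, Measure (Ω i)} [∀ i, IsProbabilityMeasure (μ i)]
    {E S : ∀ i, Set (Ω i)} (hE : ∀ i, MeasurableSet (E i))
    (hμE : Tendsto (fun i => μ i (E i)) F (𝓝 1)) (hS : ∀ᶠ i in F, Disjoint (S i) (E i)) :
    Tendsto (fun i => μ i (S i)) F (𝓝 0) := by
  have hcompl : Tendsto (fun i => 1 - μ i (E i)) F (𝓝 0) := by
    simpa only [tsub_self] using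
      ENNReal.Tendsto.sub tendsto_const_nhds hμE (.inl ENNReal.one_ne_top)
  refine tendsto_of_tendsto_of_tendsto_of_le_of_le' tendsto_const_nhds hcompl
    (.of_forall fun i => zero_le) (hS.mono fun i hi => ?_)
  rw [← prob_compl_eq_one_sub (hE i)]
  exact measure_mono hi.subset_compl_right

lemma tendsto_measure_le_apply_selector_zero {I B : Type*} {F : Filter I} [MeasurableSpace B]
    [MeasurableSingletonClass B] {Ω : I → Type*} [∀ i, MeasurableSpace (Ω i)]
    {μ : ∀ i, Measure (Ω i)} [∀ i, IsProbabilityMeasure (μ i)] {select : ∀ i, Ω i → B}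
    (hselect : ∀ i, Measurable (select i)) {m : B}
    (hm : Tendsto (fun i => μ i {ω | select i ω = m}) F (𝓝 1)) {loss : I → B → ℝ}
    (hloss : Tendsto (fun i => loss i m) F (𝓝 0)) {ε : ℝ} (hε : 0 < ε) :
    Tendsto (fun i => μ i {ω | ε ≤ loss i (select i ω)}) F (𝓝 0) := by
  refine tendsto_measure_zero_of_eventually_disjoint
    (fun i => hselect i (measurableSet_singleton m)) hm ?_
  filter_upwards [hloss.eventually_lt_const hε] with i hi
  exact Set.disjoint_left.2 fun ω hω hωm => hi.not_ge (hωm ▸ hω)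

end Probability

section Selection

/-- The plug-in density `f̌ₙ` based on the second-moment matrix `M`, as a function of the selected
model, where `true` stands for the unrestricted one. -/
def selectedDens (σ2 α : ℝ) (M : Matrix (Fin k₁ ⊕ Fin k₂) (Fin k₁ ⊕ Fin k₂) ℝ) (m : Bool)
    (t : Fin k₁ ⊕ Fin k₂ → ℝ) : ℝ :=
  if m = true then gaussCovDens σ2 M t else fInfty M σ2 α 0 t

variable {σ2 α : ℝ}

lemma integrable_selectedDens (hσ : 0 < σ2) (hα : 0 < α)
    {M : Matrix (Fin k₁ ⊕ Fin k₂) (Fin k₁ ⊕ Fin k₂) ℝ} (hM : M.PosDef) (m : Bool) :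
    Integrable (selectedDens σ2 α M m) := by
  cases m with
  | false => exact integrable_fInfty hσ hα hM 0
  | true => exact integrable_gaussCovDens hσ hM

variable {Q : Matrix (Fin k₁ ⊕ Fin k₂) (Fin k₁ ⊕ Fin k₂) ℝ}
  {X : ∀ n : ℕ, Matrix (Fin n) (Fin k₁ ⊕ Fin k₂) ℝ}

lemma eventually_posDef_smul_gram (hQ : Q.PosDef)
    (hlim : Tendsto (fun n : ℕ => (n : ℝ)⁻¹ • ((X n)ᵀ * X n)) atTop (𝓝 Q)) :
    ∀ᶠ n : ℕ in atTop, ((n : ℝ)⁻¹ • ((X n)ᵀ * X n)).PosDef := by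
  obtain ⟨c, hc, hcoercive⟩ := exists_eventually_forall_mul_dotProduct_le hQ
  refine (hlim.eventually hcoercive).mono fun n hn => posDef_of_forall_mul_dotProduct_le ?_ hc hn
  exact (isHermitian_conjTranspose_mul_self (X n)).smul (.all _)

lemma eventually_fdens_eq_fInfty (hQ : Q.PosDef)
    (hlim : Tendsto (fun n : ℕ => (n : ℝ)⁻¹ • ((X n)ᵀ * X n)) atTop (𝓝 Q))
    (β : Fin k₁ ⊕ Fin k₂ → ℝ) (σ2 α : ℝ) : ∀ᶠ n : ℕ in atTop, fdens (X n) β σ2 α =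
      fInfty ((n : ℝ)⁻¹ • ((X n)ᵀ * X n)) σ2 α (√n • (β ∘ Sum.inr)) := by
  filter_upwards [eventually_posDef_smul_gram hQ hlim, eventually_ne_atTop 0] with n hpos hn
  have hn' : 0 < (n : ℝ) := by positivity
  have hgram : ((X n)ᵀ * X n).PosDef := by
    simpa only [smul_inv_smul₀ hn'.ne'] using hpos.smul hn'
  exact fdens_eq_fInfty (X n) hn hgram β σ2 α

lemma eventually_integrable_fdens (hσ : 0 < σ2) (hα : 0 < α) (hQ : Q.PosDef)
    (hlim : Tendsto (fun n : ℕ => (n : ℝ)⁻¹ • ((X n)ᵀ * X n)) atTop (𝓝 Q))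
    (β : Fin k₁ ⊕ Fin k₂ → ℝ) : ∀ᶠ n : ℕ in atTop, Integrable (fdens (X n) β σ2 α) := by
  filter_upwards [eventually_posDef_smul_gram hQ hlim, eventually_fdens_eq_fInfty hQ hlim β σ2 α]
    with n hpos hfdens
  exact hfdens ▸ integrable_fInfty hσ hα hpos _

lemma tendsto_integral_abs_selectedDens_false_sub_fdens (hQ : Q.PosDef)
    (hlim : Tendsto (fun n : ℕ => (n : ℝ)⁻¹ • ((X n)ᵀ * X n)) atTop (𝓝 Q))
    {β : Fin k₁ ⊕ Fin k₂ → ℝ} (hβ : β ∘ Sum.inr = 0) :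
    Tendsto (fun n : ℕ => ∫ t, |selectedDens σ2 α ((n : ℝ)⁻¹ • ((X n)ᵀ * X n)) false t -
      fdens (X n) β σ2 α t|) atTop (𝓝 0) := by
  refine tendsto_const_nhds.congr' ((eventually_fdens_eq_fInfty hQ hlim β σ2 α).mono fun n hn => ?_)
  simp [hn, hβ, selectedDens]

lemma tendsto_integral_abs_selectedDens_true_sub_fdens (hσ : 0 < σ2) (hα : 0 < α) (hQ : Q.PosDef)
    (hlim : Tendsto (fun n : ℕ => (n : ℝ)⁻¹ • ((X n)ᵀ * X n)) atTop (𝓝 Q))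
    {β : Fin k₁ ⊕ Fin k₂ → ℝ} (hβ : β ∘ Sum.inr ≠ 0) :
    Tendsto (fun n : ℕ => ∫ t, |selectedDens σ2 α ((n : ℝ)⁻¹ • ((X n)ᵀ * X n)) true t -
      fdens (X n) β σ2 α t|) atTop (𝓝 0) := by
  have hβ_pos : 0 < enorm2 (β ∘ Sum.inr) :=
    (enorm2_nonneg _).lt_of_ne' (mt enorm2_eq_zero.1 hβ)
  have hγ : Tendsto (fun n : ℕ => enorm2 (√n • (β ∘ Sum.inr))) atTop atTop := by
    simp only [enorm2_smul, abs_of_nonneg (Real.sqrt_nonneg _)]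
    exact (Real.tendsto_sqrt_atTop.comp tendsto_natCast_atTop_atTop).atTop_mul_const hβ_pos
  refine (tendsto_integral_abs_gaussCovDens_sub_fInfty hσ hα hQ hlim
    (eventually_posDef_smul_gram hQ hlim) hγ).congr' ?_
  filter_upwards [eventually_fdens_eq_fInfty hQ hlim β σ2 α] with n hn
  simp only [hn, selectedDens, if_true]

end Selection

/-- consistency (in total variation) of the estimator `F̌_n` of the
finite-sample distribution built from a consistent model selector `M̂` (`M̂ = true` codes
selection of the unrestricted model `M_U`, `M̂ = false` selection of `M_R`). -/
theorem statement11 {k₁ k₂ : ℕ} (hk₁ : 0 < k₁) (hk₂ : 0 < k₂)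
    (X : ∀ n : ℕ, Matrix (Fin n) (Fin k₁ ⊕ Fin k₂) ℝ)
    (hX : ∀ n, k₁ + k₂ ≤ n → (X n).rank = k₁ + k₂)
    (Q : Matrix (Fin k₁ ⊕ Fin k₂) (Fin k₁ ⊕ Fin k₂) ℝ) (hQ : Q.PosDef)
    (hlim : Tendsto (fun n : ℕ => (n : ℝ)⁻¹ • ((X n)ᵀ * X n)) atTop (𝓝 Q))
    (σ α : ℝ) (hσ : 0 < σ) (hα : 0 < α)
    (Mhat : ∀ n : ℕ, (Fin n → ℝ) → Bool) (hM : ∀ n, Measurable (Mhat n))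
    (hMR : ∀ β : (Fin k₁ ⊕ Fin k₂) → ℝ, β ∘ Sum.inr = 0 →
      Tendsto (fun n : ℕ => Pmeas (X n) β (σ ^ 2) {Y | Mhat n Y = false})
        atTop (𝓝 (1 : ℝ≥0∞)))
    (hMU : ∀ β : (Fin k₁ ⊕ Fin k₂) → ℝ, β ∘ Sum.inr ≠ 0 →
      Tendsto (fun n : ℕ => Pmeas (X n) β (σ ^ 2) {Y | Mhat n Y = true})
        atTop (𝓝 (1 : ℝ≥0∞))) :
    ∀ β : (Fin k₁ ⊕ Fin k₂) → ℝ,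
      (∀ ε : ℝ, 0 < ε →
        Tendsto (fun n : ℕ => Pmeas (X n) β (σ ^ 2)
            {Y | ε ≤ ∫ t, |(if Mhat n Y = true then
                  gaussCovDens (σ ^ 2) ((n : ℝ)⁻¹ • ((X n)ᵀ * X n)) t
                else fInfty ((n : ℝ)⁻¹ • ((X n)ᵀ * X n)) (σ ^ 2) α 0 t) -
                fdens (X n) β (σ ^ 2) α t| ∂volume})
          atTop (𝓝 (0 : ℝ≥0∞))) ∧
      (∀ δ : ℝ, 0 < δ →
        Tendsto (fun n : ℕ => Pmeas (X n) β (σ ^ 2)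
            {Y | δ < ⨆ s : Set ((Fin k₁ ⊕ Fin k₂) → ℝ), ⨆ (_ : MeasurableSet s),
              |(∫ t in s, (if Mhat n Y = true then
                    gaussCovDens (σ ^ 2) ((n : ℝ)⁻¹ • ((X n)ᵀ * X n)) t
                  else fInfty ((n : ℝ)⁻¹ • ((X n)ᵀ * X n)) (σ ^ 2) α 0 t) ∂volume) -
                (∫ t in s, fdens (X n) β (σ ^ 2) α t ∂volume)|})
          atTop (𝓝 (0 : ℝ≥0∞))) := by
  intro β
  have hσ2 : 0 < σ ^ 2 := sq_pos_of_pos hσ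
  have (n : ℕ) : IsProbabilityMeasure (Pmeas (X n) β (σ ^ 2)) := isProbabilityMeasure_Pmeas _ β hσ2
  let loss (n : ℕ) (m : Bool) : ℝ :=
    ∫ t, |selectedDens (σ ^ 2) α ((n : ℝ)⁻¹ • ((X n)ᵀ * X n)) m t - fdens (X n) β (σ ^ 2) α t|
  obtain ⟨m, hm, hloss⟩ : ∃ m : Bool,
      Tendsto (fun n => Pmeas (X n) β (σ ^ 2) {Y | Mhat n Y = m}) atTop (𝓝 1) ∧
      Tendsto (fun n => loss n m) atTop (𝓝 0) := by
    by_cases hβ : β ∘ Sum.inr = 0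
    · exact ⟨false, hMR β hβ, tendsto_integral_abs_selectedDens_false_sub_fdens hQ hlim hβ⟩
    · exact ⟨true, hMU β hβ, tendsto_integral_abs_selectedDens_true_sub_fdens hσ2 hα hQ hlim hβ⟩
  have hL1 (ε : ℝ) (hε : 0 < ε) :
      Tendsto (fun n => Pmeas (X n) β (σ ^ 2) {Y | ε ≤ loss n (Mhat n Y)}) atTop (𝓝 0) :=
    tendsto_measure_le_apply_selector_zero hM hm hloss hε
  refine ⟨hL1, fun δ hδ => tendsto_of_tendsto_of_tendsto_of_le_of_le' tendsto_const_nhds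
    (hL1 δ hδ) (.of_forall fun n => zero_le) ?_⟩
  filter_upwards [eventually_posDef_smul_gram hQ hlim,
    eventually_integrable_fdens hσ2 hα hQ hlim β] with n hpos hfdens
  exact measure_mono fun Y hY => hY.le.trans
    (iSup_abs_setIntegral_sub_le (integrable_selectedDens hσ2 hα hpos (Mhat n Y)) hfdens)

end
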